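/- Let r ≥ 2. There exists N_r ∈ ℕ such that for all k ∈ ℕ^r not of the form (m,1,...,1), (1,...,1,m), (m,1,...,1,2,1,...,1) with m ≥ 2, or the reverses of these, and with L(k−𝟙) > N_r, one has a_r(k) ≥ (3/2)·(1/(r−1)!)·((2/r)·L(k−𝟙))^r. -/

import Mathlib

open Finset

/-- `h_r(y) = ∏_{1 ≤ ℓ ≤ j ≤ r} (y_ℓ + ⋯ + y_j)`. -/
noncomputable def hpoly (r : ℕ) (y : Fin r → ℝ) : ℝ :=
  ∏ p ∈ Finset.univ.filter (fun p : Fin r × Fin r => p.1 ≤ p.2),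
    ∑ i ∈ Finset.Icc p.1 p.2, y i

/-- `c_r = r!(r-1)!⋯1!`. -/
def crconst (r : ℕ) : ℕ := ∏ i ∈ Finset.range r, Nat.factorial (i + 1)

/-- The Weyl dimension polynomial `a_r(k) = h_r(k)/c_r`. -/
noncomputable def apoly (r : ℕ) (y : Fin r → ℝ) : ℝ := hpoly r y / crconst r

/-- The height function `L(k) = (1/2) ∑_{j=1}^r j(r+1-j) k_j` (here `j` is 1-indexed). -/
noncomputable def Lfun (r : ℕ) (k : Fin r → ℝ) : ℝ :=
  (1 / 2) * ∑ j : Fin r, ((j : ℕ) + 1 : ℝ) * ((r : ℝ) - (j : ℕ)) * k j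

noncomputable def Fq {r : ℕ} (x : Fin r → ℝ) (p : Fin r × Fin r) : ℝ :=
  (∑ i ∈ Finset.Icc p.1 p.2, x i) / ((p.2 : ℕ) - (p.1 : ℕ) + 1 : ℝ)

lemma crconst_eq (r : ℕ) : (crconst r : ℝ) =
    ∏ p ∈ Finset.univ.filter (fun p : Fin r × Fin r => p.1 ≤ p.2),
      ((p.2 : ℕ) - (p.1 : ℕ) + 1 : ℝ) := by
  rw [Finset.prod_filter, Fintype.prod_prod_type_right, crconst]
  push_cast
  rw [Finset.prod_range]
  refine Finset.prod_congr rfl fun j _ => ?_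
  have h1 : ∀ i : Fin r, (if i ≤ j then ((j : ℕ) - (i : ℕ) + 1 : ℝ) else 1)
      = (fun t : ℕ => if t ≤ (j : ℕ) then ((j : ℕ) - (t : ℕ) + 1 : ℝ) else 1) i := by
    intro i; simp only [Fin.le_def]
  simp_rw [h1]
  rw [← Finset.prod_range (n := r) (fun t : ℕ => if t ≤ (j : ℕ) then ((j : ℕ) - (t : ℕ) + 1 : ℝ) else 1),
    ← Finset.prod_filter]
  have h2 : (Finset.range r).filter (fun t => t ≤ (j : ℕ)) = Finset.range ((j : ℕ) + 1) := by
    ext t; have := j.2; simp; omega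
  rw [h2, ← Finset.prod_range_reflect, ← Finset.prod_range_add_one_eq_factorial]
  push_cast
  refine Finset.prod_congr rfl fun t ht => ?_
  have : t ≤ (j : ℕ) := by simp at ht; omega
  have e : (j : ℕ) + 1 - 1 - t = (j : ℕ) - t := by omega
  rw [Nat.cast_sub this]; ring

lemma apoly_eq (r : ℕ) (x : Fin r → ℝ) : apoly r x =
    ∏ p ∈ Finset.univ.filter (fun p : Fin r × Fin r => p.1 ≤ p.2), Fq x p := by
  rw [apoly, crconst_eq, hpoly, ← Finset.prod_div_distrib]
  rfl

lemma Fq_ge {r : ℕ} (x : Fin r → ℝ) (hx : ∀ i, 1 ≤ x i) (p : Fin r × Fin r) (i : Fin r)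
    (h1 : p.1 ≤ i) (h2 : i ≤ p.2) :
    (x i + ((p.2 : ℕ) - (p.1 : ℕ) : ℝ)) / ((p.2 : ℕ) - (p.1 : ℕ) + 1 : ℝ) ≤ Fq x p := by
  have h12 : (p.1 : ℕ) ≤ (p.2 : ℕ) := Fin.le_def.1 (h1.trans h2)
  have h12' : ((p.1 : ℕ) : ℝ) ≤ ((p.2 : ℕ) : ℝ) := by exact_mod_cast h12
  unfold Fq
  apply div_le_div_of_nonneg_right _ (by linarith)
  have hm : i ∈ Finset.Icc p.1 p.2 := Finset.mem_Icc.2 ⟨h1, h2⟩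
  rw [← Finset.add_sum_erase _ _ hm]
  have := Finset.card_nsmul_le_sum ((Finset.Icc p.1 p.2).erase i) x 1 (fun j _ => hx j)
  rw [Finset.card_erase_of_mem hm, Fin.card_Icc] at this
  have e : (p.2 : ℕ) + 1 - (p.1 : ℕ) - 1 = (p.2 : ℕ) - (p.1 : ℕ) := by omega
  rw [e, nsmul_eq_mul, Nat.cast_sub h12] at this
  linarith

lemma Fq_one_le {r : ℕ} (x : Fin r → ℝ) (hx : ∀ i, 1 ≤ x i) (p : Fin r × Fin r)
    (h : p.1 ≤ p.2) : 1 ≤ Fq x p := by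
  refine le_trans ?_ (Fq_ge x hx p p.1 le_rfl h)
  have h12' : ((p.1 : ℕ) : ℝ) ≤ ((p.2 : ℕ) : ℝ) := by exact_mod_cast (Fin.le_def.1 h)
  rw [le_div_iff₀ (by linarith)]
  linarith [hx p.1]

lemma apoly_ge {r : ℕ} (x : Fin r → ℝ) (hx : ∀ i, 1 ≤ x i) (S : Finset (Fin r × Fin r))
    (hS : ∀ p ∈ S, p.1 ≤ p.2) : ∏ p ∈ S, Fq x p ≤ apoly r x := by
  rw [apoly_eq]
  have hsub : S ⊆ Finset.univ.filter (fun p : Fin r × Fin r => p.1 ≤ p.2) := by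
    intro p hp; simp [hS p hp]
  rw [← Finset.prod_sdiff hsub]
  apply le_mul_of_one_le_left
  · exact Finset.prod_nonneg fun p hp => le_trans zero_le_one (Fq_one_le x hx p (hS p hp))
  · have := Finset.prod_le_prod (s := (Finset.univ.filter
      (fun p : Fin r × Fin r => p.1 ≤ p.2)) \ S) (f := fun _ => (1 : ℝ)) (g := Fq x)
      (fun _ _ => zero_le_one) (fun p hp => Fq_one_le x hx p (by simp at hp; exact hp.1))
    simpa using this

def pr {r : ℕ} (i t : Fin r) : Fin r × Fin r := (min t i, max t i)

lemma pr_inj {r : ℕ} (i : Fin r) : Function.Injective (pr i) := by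
  intro a b h
  simp only [pr, Prod.mk.injEq, Fin.ext_iff, Fin.coe_min, Fin.coe_max] at h
  ext; omega

lemma pr_le {r : ℕ} (i t : Fin r) : (pr i t).1 ≤ (pr i t).2 := by simp [pr]

/-- distance -/
def ds {r : ℕ} (i t : Fin r) : ℕ := max (t : ℕ) i - min (t : ℕ) i

lemma Fq_pr {r : ℕ} (x : Fin r → ℝ) (hx : ∀ i, 1 ≤ x i) (i t : Fin r) :
    (x i + ds i t) / (ds i t + 1 : ℝ) ≤ Fq x (pr i t) := by
  have := Fq_ge x hx (pr i t) i (by simp [pr]) (by simp [pr])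
  have e : ((ds i t : ℕ) : ℝ) = ((pr i t).2 : ℕ) - ((pr i t).1 : ℕ) := by
    rw [ds, Nat.cast_sub (by omega)]; simp [pr]
  rw [e]; exact this

lemma hpoly_rev (r : ℕ) (y : Fin r → ℝ) : hpoly r (fun i => y i.rev) = hpoly r y := by
  unfold hpoly
  refine Finset.prod_bij' (fun p _ => (p.2.rev, p.1.rev)) (fun p _ => (p.2.rev, p.1.rev))
    ?_ ?_ ?_ ?_ ?_
  · intro p hp; simpa using hp
  · intro p hp; simpa using hp
  · intro p hp; simp
  · intro p hp; simp
  · intro p hp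
    refine Finset.sum_bij' (fun i _ => i.rev) (fun i _ => i.rev) ?_ ?_ ?_ ?_ ?_
    · intro i hi; simp only [Finset.mem_Icc, Fin.rev_le_rev] at *; exact ⟨hi.2, hi.1⟩
    · intro i hi; simp only [Finset.mem_Icc] at *
      constructor
      · rw [Fin.le_rev_iff]; exact hi.2
      · rw [Fin.rev_le_iff]; exact hi.1
    · intro i hi; simp
    · intro i hi; simp
    · intro i hi; simp

lemma Lfun_rev (r : ℕ) (y : Fin r → ℝ) : Lfun r (fun i => y i.rev) = Lfun r y := by
  unfold Lfun
  congr 1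
  refine Fintype.sum_equiv Fin.revPerm _ _ fun i => ?_
  simp only [Fin.revPerm_apply, Fin.val_rev]
  rw [Nat.cast_sub i.2]
  push_cast; ring

lemma prod_tele1 (n : ℕ) : ∏ d ∈ Finset.range n, ((d : ℝ) + 2) / (d + 1) = n + 1 := by
  induction n with
  | zero => simp
  | succ n ih => rw [Finset.prod_range_succ, ih]; push_cast; field_simp; try ring

lemma prod_tele2 (n : ℕ) : ∏ d ∈ Finset.range n, ((d : ℝ) + 3) / (d + 1) = (n + 1) * (n + 2) / 2 := by
  induction n with
  | zero => simp
  | succ n ih => rw [Finset.prod_range_succ, ih]; push_cast; field_simp; try ring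

/-- splitting a product over distance -/
lemma prod_ds (m : ℕ) (f : ℕ → ℝ) (h0 : f 0 ≠ 0) (i : Fin (m + 2)) (hi : i ≠ 0) :
    ∏ t ∈ Finset.univ.erase (0 : Fin (m + 2)), f (ds i t)
      = (∏ d ∈ Finset.range i, f d) * (∏ d ∈ Finset.range (m + 2 - i), f d) / f 0 := by
  have hi' : 1 ≤ (i : ℕ) := by
    have : (i : ℕ) ≠ 0 := fun h => hi (Fin.ext h)
    omega
  have e : ∏ t ∈ Finset.univ.erase (0 : Fin (m + 2)), f (ds i t)
      = ∏ t ∈ Finset.Ico 1 (m + 2), f (max t i - min t i) := by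
    refine Finset.prod_bij (fun t _ => (t : ℕ)) ?_ ?_ ?_ ?_
    · intro t ht
      have : (t : ℕ) ≠ 0 := fun h => by simp at ht; exact ht (Fin.ext h)
      have := t.2
      simp; omega
    · intro a _ b _ h; exact Fin.ext h
    · intro b hb
      simp at hb
      refine ⟨⟨b, by omega⟩, ?_, rfl⟩
      simp [Fin.ext_iff]; omega
    · intro t _; rfl
  rw [e, ← Finset.prod_Ico_consecutive _ hi' (by omega : (i : ℕ) ≤ m + 2)]
  have a1 : ∏ t ∈ Finset.Ico 1 (i : ℕ), f (max t i - min t i)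
      = (∏ d ∈ Finset.range i, f d) / f 0 := by
    rw [eq_div_iff h0, Finset.prod_Ico_eq_prod_range, ← Finset.prod_range_reflect]
    obtain ⟨k, hk⟩ : ∃ k, (i : ℕ) = k + 1 := ⟨i - 1, by omega⟩
    rw [hk, Finset.prod_range_succ' f]
    congr 1
    simp only [Nat.add_sub_cancel]
    refine Finset.prod_congr rfl fun t ht => ?_
    simp at ht
    congr 1; omega
  have a2 : ∏ t ∈ Finset.Ico (i : ℕ) (m + 2), f (max t i - min t i)
      = ∏ d ∈ Finset.range (m + 2 - i), f d := by
    rw [Finset.prod_Ico_eq_prod_range]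
    refine Finset.prod_congr rfl fun t ht => ?_
    congr 1; omega
  rw [a1, a2]; ring

lemma prod_zero_ge {m : ℕ} (x : Fin (m + 2) → ℝ) (hx : ∀ i, 1 ≤ x i) :
    x 0 ^ (m + 2) / (m + 2).factorial ≤ ∏ t, Fq x (pr 0 t) := by
  have h : ∏ t : Fin (m + 2), (x 0 / ((t : ℕ) + 1 : ℝ)) ≤ ∏ t, Fq x (pr 0 t) := by
    refine Finset.prod_le_prod (fun t _ => ?_) (fun t _ => ?_)
    · have := hx 0; positivity
    · refine le_trans ?_ (Fq_pr x hx 0 t)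
      have : ds 0 t = (t : ℕ) := by simp [ds]
      rw [this]
      apply div_le_div_of_nonneg_right _ (by positivity)
      have : (0 : ℝ) ≤ (t : ℕ) := by positivity
      linarith
  refine le_trans (le_of_eq ?_) h
  rw [Finset.prod_div_distrib]
  simp only [Finset.prod_const, Finset.card_univ, Fintype.card_fin]
  rw [← Finset.prod_range_add_one_eq_factorial, Finset.prod_range]
  push_cast; rfl

/-- splitting off the row zero -/
lemma apoly_edge {m : ℕ} (x : Fin (m + 2) → ℝ) (hx : ∀ i, 1 ≤ x i)
    (S : Finset (Fin (m + 2) × Fin (m + 2)))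
    (hS : ∀ p ∈ S, p.1 ≤ p.2 ∧ p.1 ≠ 0) (G : ℝ) (hG : G ≤ ∏ p ∈ S, Fq x p) (hG0 : 0 ≤ G) :
    x 0 ^ (m + 2) / (m + 2).factorial * G ≤ apoly (m + 2) x := by
  have h := apoly_ge x hx (Finset.univ.image (pr 0) ∪ S) (by
    intro p hp
    rw [Finset.mem_union] at hp
    rcases hp with hp | hp
    · rw [Finset.mem_image] at hp
      obtain ⟨t, _, rfl⟩ := hp
      exact pr_le _ _
    · exact (hS p hp).1)
  rw [Finset.prod_union, Finset.prod_image (fun a _ b _ h => pr_inj 0 h)] at h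
  · refine le_trans ?_ h
    refine mul_le_mul (prod_zero_ge x hx) hG hG0 ?_
    exact Finset.prod_nonneg fun p hp => le_trans zero_le_one (Fq_one_le x hx _ (pr_le _ _))
  · rw [Finset.disjoint_left]
    intro p hp hp2
    rw [Finset.mem_image] at hp
    obtain ⟨t, _, rfl⟩ := hp
    apply (hS _ hp2).2
    simp [pr]

lemma pr_ne {m : ℕ} (i t : Fin (m + 2)) (hi : i ≠ 0) (ht : t ≠ 0) : (pr i t).1 ≠ 0 := by
  simp only [pr]
  rcases min_choice t i with h | h <;> rw [h] <;> assumption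

/-- Lower bound for one tail entry at least 3. -/
lemma tail3 {m : ℕ} (hm : 1 ≤ m) (x : Fin (m + 2) → ℝ) (hx : ∀ i, 1 ≤ x i) (i : Fin (m + 2))
    (hi : i ≠ 0) (h3 : 3 ≤ x i) :
    x 0 ^ (m + 2) / (m + 2).factorial * (2 * (m + 2)) ≤ apoly (m + 2) x := by
  refine apoly_edge x hx ((Finset.univ.erase 0).image (pr i)) ?_ _ ?_ (by positivity)
  · intro p hp
    rw [Finset.mem_image] at hp
    obtain ⟨t, ht, rfl⟩ := hp
    exact ⟨pr_le _ _, pr_ne i t hi (by simpa using ht)⟩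
  rw [Finset.prod_image (fun a _ b _ h => pr_inj i h)]
  have h : ∏ t ∈ Finset.univ.erase (0 : Fin (m + 2)), (fun d : ℕ => ((d : ℝ) + 3) / (d + 1)) (ds i t)
      ≤ ∏ t ∈ Finset.univ.erase (0 : Fin (m + 2)), Fq x (pr i t) := by
    refine Finset.prod_le_prod (fun t _ => by positivity) (fun t _ => ?_)
    refine le_trans ?_ (Fq_pr x hx i t)
    apply div_le_div_of_nonneg_right _ (by positivity)
    linarith
  refine le_trans ?_ h
  rw [prod_ds m (fun d : ℕ => ((d : ℝ) + 3) / (d + 1)) (by norm_num) i hi, prod_tele2, prod_tele2]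
  have hi' : 1 ≤ (i : ℕ) := by
    have : (i : ℕ) ≠ 0 := fun h => hi (Fin.ext h)
    omega
  obtain ⟨b, hb⟩ : ∃ b, m + 2 - (i : ℕ) = b := ⟨_, rfl⟩
  have hbi : (m : ℝ) + 2 = b + (i : ℕ) := by
    have := i.2
    have : m + 2 = b + (i : ℕ) := by omega
    exact_mod_cast this
  have hb1 : (1 : ℝ) ≤ b := by
    have := i.2
    have : 1 ≤ b := by omega
    exact_mod_cast this
  have hi1 : (1 : ℝ) ≤ (i : ℕ) := by exact_mod_cast hi'
  have hm1 : (1 : ℝ) ≤ m := by exact_mod_cast hm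
  rw [hb, hbi]
  generalize ((i : ℕ) : ℝ) = a at *
  generalize (b : ℝ) = c at *
  have q1 : 2 * (c + a) ≤ (c + 1) * (a + 1) := by nlinarith
  have q2 : 3 * (c + a + 1) ≤ (c + 2) * (a + 2) := by nlinarith
  have q3 := mul_le_mul q1 q2 (by linarith) (by nlinarith)
  norm_num
  nlinarith

/-- Lower bound for two tail entries at least 2. -/
lemma tail22 {m : ℕ} (x : Fin (m + 2) → ℝ) (hx : ∀ i, 1 ≤ x i) (i j : Fin (m + 2))
    (hi : i ≠ 0) (hj : j ≠ 0) (hij : j ≠ i) (hi2 : 2 ≤ x i) (hj2 : 2 ≤ x j) :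
    x 0 ^ (m + 2) / (m + 2).factorial * (2 * (m + 2)) ≤ apoly (m + 2) x := by
  have hn : pr j j ∉ (Finset.univ.erase 0).image (pr i) := by
    intro h
    rw [Finset.mem_image] at h
    obtain ⟨t, ht, h⟩ := h
    simp only [pr, Prod.mk.injEq, Fin.ext_iff, Fin.coe_min, Fin.coe_max] at h
    apply hij; ext; omega
  refine apoly_edge x hx (insert (pr j j) ((Finset.univ.erase 0).image (pr i))) ?_ _ ?_ (by positivity)
  · intro p hp
    rw [Finset.mem_insert, Finset.mem_image] at hp
    rcases hp with rfl | ⟨t, ht, rfl⟩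
    · exact ⟨pr_le _ _, pr_ne j j hj hj⟩
    exact ⟨pr_le _ _, pr_ne i t hi (by simpa using ht)⟩
  rw [Finset.prod_insert hn, Finset.prod_image (fun a _ b _ h => pr_inj i h)]
  have hjj : 2 ≤ Fq x (pr j j) := by
    refine le_trans ?_ (Fq_pr x hx j j)
    simpa [ds] using hj2
  have h : ∏ t ∈ Finset.univ.erase (0 : Fin (m + 2)), (fun d : ℕ => ((d : ℝ) + 2) / (d + 1)) (ds i t)
      ≤ ∏ t ∈ Finset.univ.erase (0 : Fin (m + 2)), Fq x (pr i t) := by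
    refine Finset.prod_le_prod (fun t _ => by positivity) (fun t _ => ?_)
    refine le_trans ?_ (Fq_pr x hx i t)
    apply div_le_div_of_nonneg_right _ (by positivity)
    linarith
  refine mul_le_mul hjj (le_trans ?_ h) (by positivity) (by linarith)
  rw [prod_ds m (fun d : ℕ => ((d : ℝ) + 2) / (d + 1)) (by norm_num) i hi, prod_tele1, prod_tele1]
  have hi' : 1 ≤ (i : ℕ) := by
    have : (i : ℕ) ≠ 0 := fun h => hi (Fin.ext h)
    omega
  obtain ⟨b, hb⟩ : ∃ b, m + 2 - (i : ℕ) = b := ⟨_, rfl⟩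
  have hbi : (m : ℝ) + 2 = b + (i : ℕ) := by
    have := i.2
    have : m + 2 = b + (i : ℕ) := by omega
    exact_mod_cast this
  have hb1 : (1 : ℝ) ≤ b := by
    have := i.2
    have : 1 ≤ b := by omega
    exact_mod_cast this
  have hi1 : (1 : ℝ) ≤ (i : ℕ) := by exact_mod_cast hi'
  rw [hb, hbi]
  generalize ((i : ℕ) : ℝ) = a at *
  generalize (b : ℝ) = c at *
  norm_num
  nlinarith

lemma tailbig {m : ℕ} (x : Fin (m + 2) → ℝ) (hx : ∀ i, 1 ≤ x i) (j : Fin (m + 2))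
    (hj : j ≠ 0) :
    x 0 ^ (m + 2) / (m + 2).factorial * x j ≤ apoly (m + 2) x := by
  refine apoly_edge x hx {pr j j} ?_ _ ?_ (by linarith [hx j])
  · intro p hp
    rw [Finset.mem_singleton] at hp
    subst hp
    exact ⟨pr_le _ _, pr_ne j j hj hj⟩
  · rw [Finset.prod_singleton]
    refine le_trans ?_ (Fq_pr x hx j j)
    simp [ds]

lemma middle {m : ℕ} (x : Fin (m + 2) → ℝ) (hx : ∀ i, 1 ≤ x i) (i : Fin (m + 2))
    (hi : i ≠ 0) (hl : i ≠ Fin.last (m + 1)) :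
    (x i / (m + 2)) ^ (m + 3) ≤ apoly (m + 2) x := by
  have hn : ((0 : Fin (m + 2)), Fin.last (m + 1)) ∉ Finset.univ.image (pr i) := by
    intro h
    rw [Finset.mem_image] at h
    obtain ⟨t, ht, h⟩ := h
    simp only [pr, Prod.mk.injEq] at h
    rcases min_choice t i with h' | h' <;> rcases max_choice t i with h'' | h'' <;>
      rw [h', h''] at h
    · have := h.1.symm.trans h.2
      simp [Fin.ext_iff] at this
    · exact hl h.2
    · exact hi h.1
    · exact hi h.1
  have h := apoly_ge x hx (insert ((0 : Fin (m + 2)), Fin.last (m + 1)) (Finset.univ.image (pr i))) (by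
    intro p hp
    rw [Finset.mem_insert, Finset.mem_image] at hp
    rcases hp with rfl | ⟨t, ht, rfl⟩
    · simp
    · exact pr_le _ _)
  rw [Finset.prod_insert hn, Finset.prod_image (fun a _ b _ h => pr_inj i h)] at h
  refine le_trans ?_ h
  have hx0 := hx i
  rw [pow_succ']
  refine mul_le_mul ?_ ?_ (by positivity) ?_
  · refine le_trans ?_ (Fq_ge x hx _ i (by simp) (Fin.le_last i))
    simp only [Fin.val_last, Fin.val_zero]
    push_cast
    rw [show ((m : ℝ) + 1 - 0 + 1) = m + 2 by ring]
    apply div_le_div_of_nonneg_right _ (by positivity)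
    have : (0 : ℝ) ≤ m := by positivity
    linarith
  · have := Finset.prod_le_prod (s := Finset.univ) (f := fun _ : Fin (m + 2) => x i / (m + 2 : ℝ))
      (g := fun t => Fq x (pr i t)) (fun _ _ => by positivity) (fun t _ => by
        refine le_trans ?_ (Fq_pr x hx i t)
        have hd : ds i t + 1 ≤ m + 2 := by
          have := i.2; have := t.2; simp only [ds]; omega
        have hd' : (ds i t : ℝ) + 1 ≤ m + 2 := by exact_mod_cast hd
        have : (0 : ℝ) ≤ ds i t := by positivity
        apply div_le_div₀ (by linarith) (by linarith) (by positivity) hd')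
    rw [Finset.prod_const, Finset.card_univ, Fintype.card_fin] at this
    exact this
  · exact le_trans zero_le_one (Fq_one_le x hx _ (by simp))

lemma Lbound1 {m : ℕ} (x : Fin (m + 2) → ℝ) (hx : ∀ i, 1 ≤ x i) (B : ℝ)
    (hB : ∀ i, i ≠ 0 → x i ≤ B) (hB0 : 0 ≤ B) :
    2 / ((m : ℝ) + 2) * Lfun (m + 2) (fun i => x i - 1) ≤ x 0 + ((m : ℝ) + 2) ^ 2 * B := by
  have hr : (0 : ℝ) < (m : ℝ) + 2 := by positivity
  unfold Lfun
  have key : ∑ j : Fin (m + 2), ((j : ℕ) + 1 : ℝ) * (((m + 2 : ℕ) : ℝ) - (j : ℕ)) * (x j - 1)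
      ≤ ∑ j : Fin (m + 2), ((if j = 0 then ((m : ℝ) + 2) * x 0 else 0) + ((m : ℝ) + 2) ^ 2 * B) := by
    refine Finset.sum_le_sum fun j _ => ?_
    have hj := j.2
    have hj1 : ((j : ℕ) : ℝ) + 1 ≤ m + 2 := by exact_mod_cast hj
    have hj0 : (0 : ℝ) ≤ (j : ℕ) := by positivity
    push_cast
    by_cases h : j = 0
    · subst h
      have : 0 ≤ ((m : ℝ) + 2) ^ 2 * B := by positivity
      simp
      nlinarith
    · rw [if_neg h, zero_add, sq]
      have := hx j
      have := hB j h
      apply mul_le_mul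
      · apply mul_le_mul hj1 (by linarith) (by linarith) hr.le
      · linarith
      · linarith
      · positivity
  rw [Finset.sum_add_distrib, Finset.sum_ite_eq' Finset.univ 0, Finset.sum_const, Finset.card_univ,
    Fintype.card_fin, nsmul_eq_mul] at key
  simp only [Finset.mem_univ, if_true] at key
  generalize ∑ j : Fin (m + 2), ((j : ℕ) + 1 : ℝ) * (((m + 2 : ℕ) : ℝ) - (j : ℕ)) * (x j - 1) = Z at *
  have e : 2 / ((m : ℝ) + 2) * (1 / 2 * Z) = Z / (m + 2) := by field_simp
  rw [e, div_le_iff₀ hr]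
  push_cast at key
  linarith

lemma Lbound2 {m : ℕ} (x : Fin (m + 2) → ℝ) (hx : ∀ i, 1 ≤ x i) (n : ℝ)
    (hB : ∀ i, x i ≤ n) :
    2 / ((m : ℝ) + 2) * Lfun (m + 2) (fun i => x i - 1) ≤ 2 * ((m : ℝ) + 2) ^ 2 * n := by
  have hn : 1 ≤ n := (hx 0).trans (hB 0)
  have := Lbound1 x hx n (fun i _ => hB i) (by linarith)
  have h0 := hB 0
  have : (1 : ℝ) ≤ ((m : ℝ) + 2) ^ 2 := by
    have : (0 : ℝ) ≤ m := by positivity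
    nlinarith
  nlinarith

lemma Lnonneg {m : ℕ} (x : Fin (m + 2) → ℝ) (hx : ∀ i, 1 ≤ x i) :
    0 ≤ 2 / ((m : ℝ) + 2) * Lfun (m + 2) (fun i => x i - 1) := by
  unfold Lfun
  have : 0 ≤ ∑ j : Fin (m + 2), ((j : ℕ) + 1 : ℝ) * (((m + 2 : ℕ) : ℝ) - (j : ℕ)) * (x j - 1) := by
    refine Finset.sum_nonneg fun j _ => ?_
    have hj1 : ((j : ℕ) : ℝ) ≤ (m + 2 : ℕ) := by exact_mod_cast j.2.le
    have := hx j
    exact mul_nonneg (mul_nonneg (by positivity) (by linarith)) (by linarith)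
  positivity

lemma bridge {m : ℕ} (X n G Y A : ℝ) (h0 : 0 ≤ X) (hXY : X ≤ Y)
    (hA : n ^ (m + 2) / (m + 2).factorial * G ≤ A)
    (h : 3 / 2 * ((m : ℝ) + 2) * Y ^ (m + 2) ≤ n ^ (m + 2) * G) :
    3 / 2 * (1 / ((m + 1).factorial : ℝ)) * X ^ (m + 2) ≤ A := by
  refine le_trans ?_ hA
  have hX : X ^ (m + 2) ≤ Y ^ (m + 2) := pow_le_pow_left₀ h0 hXY _
  have e : (((m + 2).factorial : ℕ) : ℝ) = ((m : ℝ) + 2) * (m + 1).factorial := by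
    rw [Nat.factorial_succ]; push_cast; ring
  have hf : (0 : ℝ) < (m + 1).factorial := by exact_mod_cast Nat.factorial_pos _
  have hr : (0 : ℝ) < (m : ℝ) + 2 := by positivity
  rw [e, div_mul_eq_mul_div (n ^ (m + 2)), le_div_iff₀ (by positivity)]
  have e2 : 3 / 2 * (1 / ((m + 1).factorial : ℝ)) * X ^ (m + 2) * (((m : ℝ) + 2) * (m + 1).factorial)
      = 3 / 2 * ((m : ℝ) + 2) * X ^ (m + 2) := by field_simp
  rw [e2]
  refine le_trans ?_ h
  gcongr

lemma evt (r : ℕ) (C : ℝ) : ∃ N : ℝ, 1 ≤ N ∧ ∀ n : ℝ, N ≤ n → (n + C) ^ r ≤ 4 / 3 * n ^ r := by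
  have h1 : Filter.Tendsto (fun n : ℝ => (1 + C / n) ^ r) Filter.atTop (nhds ((1 + 0) ^ r)) :=
    (tendsto_const_nhds.add (tendsto_const_nhds.div_atTop Filter.tendsto_id)).pow r
  rw [add_zero, one_pow] at h1
  have h2 := h1.eventually_lt_const (show (1 : ℝ) < 4 / 3 by norm_num)
  obtain ⟨N, hN⟩ := Filter.eventually_atTop.1 h2
  refine ⟨max N 1, le_max_right _ _, fun n hn => ?_⟩
  have hn1 : 1 ≤ n := (le_max_right _ _).trans hn
  have := hN n ((le_max_left _ _).trans hn)
  have e : n + C = n * (1 + C / n) := by field_simp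
  rw [e, mul_pow, mul_comm]
  gcongr

lemma edge (m : ℕ) (hm : 1 ≤ m) : ∃ N : ℝ, ∀ v : Fin (m + 2) → ℕ, (∀ i, 1 ≤ v i) →
    ¬ (∀ i, i ≠ 0 → v i = 1) →
    ¬ (2 ≤ v 0 ∧ ∃ n : Fin (m + 2), n ≠ 0 ∧ v n = 2 ∧ ∀ i, i ≠ 0 → i ≠ n → v i = 1) →
    (∀ i, v i ≤ v 0) → N ≤ (v 0 : ℝ) →
    3 / 2 * (1 / (Nat.factorial (m + 1)))
          * (2 / ((m : ℝ) + 2) * Lfun (m + 2) (fun i => (v i : ℝ) - 1)) ^ (m + 2)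
        ≤ apoly (m + 2) (fun i => (v i : ℝ)) := by
  set B : ℝ := 3 / 2 * ((m : ℝ) + 2) * (2 * ((m : ℝ) + 2) ^ 2) ^ (m + 2) with hB
  have hB0 : 0 ≤ B := by positivity
  obtain ⟨N, hN1, hN⟩ := evt (m + 2) (((m : ℝ) + 2) ^ 2 * B)
  refine ⟨N, fun v hv hA1 hA2 hmax hn => ?_⟩
  have hx : ∀ i, (1 : ℝ) ≤ (v i : ℝ) := fun i => by exact_mod_cast hv i
  have hmx : ∀ i, (v i : ℝ) ≤ v 0 := fun i => by exact_mod_cast hmax i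
  have hL0 := Lnonneg (fun i => (v i : ℝ)) hx
  by_cases hb : ∃ j, j ≠ 0 ∧ B ≤ (v j : ℝ)
  · obtain ⟨j, hj, hBj⟩ := hb
    refine bridge _ _ _ _ _ hL0 (Lbound2 (fun i => (v i : ℝ)) hx _ hmx)
      (tailbig (fun i => (v i : ℝ)) hx j hj) ?_
    rw [mul_pow, ← mul_assoc, mul_comm]
    gcongr
  · push Not at hb
    have hL := Lbound1 (fun i => (v i : ℝ)) hx B (fun i hi => (hb i hi).le) hB0
    have hG : (v 0 : ℝ) ^ (m + 2) / (m + 2).factorial * (2 * (m + 2))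
        ≤ apoly (m + 2) (fun i => (v i : ℝ)) := by
      push Not at hA1
      obtain ⟨i, hi, hvi⟩ := hA1
      have hi1 := hv i
      have h02 : 2 ≤ v 0 := by have := hmax i; omega
      by_cases h3 : 3 ≤ v i
      · exact tail3 hm (fun i => (v i : ℝ)) hx i hi (by exact_mod_cast h3)
      · have hi2 : v i = 2 := by omega
        have : ∃ j, j ≠ 0 ∧ j ≠ i ∧ v j ≠ 1 := by
          by_contra hcon
          push Not at hcon
          exact hA2 ⟨h02, i, hi, hi2, hcon⟩
        obtain ⟨j, hj, hji, hvj⟩ := this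
        have hj1 := hv j
        have hj2 : 2 ≤ v j := by omega
        exact tail22 (fun i => (v i : ℝ)) hx i j hi hj hji (by exact_mod_cast hi2.ge)
          (by exact_mod_cast hj2)
    refine bridge _ _ _ _ _ hL0 hL hG ?_
    have := hN _ hn
    calc 3 / 2 * ((m : ℝ) + 2) * ((v 0 : ℝ) + ((m : ℝ) + 2) ^ 2 * B) ^ (m + 2)
        ≤ 3 / 2 * ((m : ℝ) + 2) * (4 / 3 * (v 0 : ℝ) ^ (m + 2)) := by gcongr
      _ = _ := by ring

lemma mid (m : ℕ) : ∃ N : ℝ, ∀ v : Fin (m + 2) → ℕ, (∀ i, 1 ≤ v i) →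
    ∀ i, i ≠ 0 → i ≠ Fin.last (m + 1) → (∀ j, v j ≤ v i) → N ≤ (v i : ℝ) →
    3 / 2 * (1 / (Nat.factorial (m + 1)))
          * (2 / ((m : ℝ) + 2) * Lfun (m + 2) (fun i => (v i : ℝ) - 1)) ^ (m + 2)
        ≤ apoly (m + 2) (fun i => (v i : ℝ)) := by
  refine ⟨3 / 2 * (2 * ((m : ℝ) + 2) ^ 2) ^ (m + 2) * ((m : ℝ) + 2) ^ (m + 3),
    fun v hv i hi hl hmax hn => ?_⟩
  have hx : ∀ i, (1 : ℝ) ≤ (v i : ℝ) := fun i => by exact_mod_cast hv i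
  have hmx : ∀ j, (v j : ℝ) ≤ v i := fun j => by exact_mod_cast hmax j
  have hL0 := Lnonneg (fun i => (v i : ℝ)) hx
  have hL := pow_le_pow_left₀ hL0 (Lbound2 (fun i => (v i : ℝ)) hx _ hmx) (m + 2)
  refine le_trans ?_ (middle (fun i => (v i : ℝ)) hx i hi hl)
  have hf : 1 / ((m + 1).factorial : ℝ) ≤ 1 := by
    rw [div_le_one (by exact_mod_cast Nat.factorial_pos _)]
    exact_mod_cast Nat.factorial_pos _
  have hr : (0 : ℝ) < (m : ℝ) + 2 := by positivity
  rw [div_pow, le_div_iff₀ (by positivity), pow_succ' (v i : ℝ)]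
  calc _ ≤ 3 / 2 * 1 * (2 * ((m : ℝ) + 2) ^ 2 * (v i : ℝ)) ^ (m + 2) * ((m : ℝ) + 2) ^ (m + 3) := by
        gcongr
    _ = (3 / 2 * (2 * ((m : ℝ) + 2) ^ 2) ^ (m + 2) * ((m : ℝ) + 2) ^ (m + 3)) * (v i : ℝ) ^ (m + 2) := by
        rw [mul_pow]; ring
    _ ≤ _ := by gcongr

lemma apoly_two (x : Fin 2 → ℝ) : apoly 2 x = x 0 * x 1 * (x 0 + x 1) / 2 := by
  have h : (Finset.univ.filter (fun p : Fin 2 × Fin 2 => p.1 ≤ p.2)) = {(0, 0), (1, 1), (0, 1)} := by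
    decide
  have h2 : Finset.Icc (0 : Fin 2) 1 = {0, 1} := by decide
  rw [apoly, hpoly, h]
  have hc : crconst 2 = 2 := by decide
  rw [hc, Finset.prod_insert (by decide), Finset.prod_insert (by decide), Finset.prod_singleton]
  simp [h2]
  ring

/-- Lemma 5.2: with `r = m+2`, there is `N_r` such that every `v ∈ ℕ^r` not in
`Λ₁ ∪ Λ₂` (i.e. not of the form `(a,1,…,1)`, `(1,…,1,a)`, `(a,1,…,1,2,1,…,1)` with
`a ≥ 2`, or its reverse) with `L(v-𝟙) > N_r` satisfies
`a_r(v) ≥ (3/2)(1/(r-1)!)((2/r)L(v-𝟙))^r`. -/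
theorem stmt16 (m : ℕ) :
    ∃ Nr : ℕ, ∀ v : Fin (m + 2) → ℕ, (∀ i, 1 ≤ v i) →
      ¬ ((∀ i, i ≠ 0 → v i = 1) ∨
         (∀ i, i ≠ Fin.last (m + 1) → v i = 1) ∨
         (2 ≤ v 0 ∧ ∃ n : Fin (m + 2), n ≠ 0 ∧ v n = 2 ∧
            ∀ i, i ≠ 0 → i ≠ n → v i = 1) ∨
         (2 ≤ v (Fin.last (m + 1)) ∧ ∃ n : Fin (m + 2), n ≠ Fin.last (m + 1) ∧ v n = 2 ∧
            ∀ i, i ≠ Fin.last (m + 1) → i ≠ n → v i = 1)) →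
      (Nr : ℝ) < Lfun (m + 2) (fun i => (v i : ℝ) - 1) →
      3 / 2 * (1 / (Nat.factorial (m + 1)))
          * (2 / ((m : ℝ) + 2) * Lfun (m + 2) (fun i => (v i : ℝ) - 1)) ^ (m + 2)
        ≤ apoly (m + 2) (fun i => (v i : ℝ)) := by
  rcases Nat.eq_zero_or_pos m with rfl | hm
  · refine ⟨1, fun v hv hex hL => ?_⟩
    have hL2 : Lfun (0 + 2) (fun i => (v i : ℝ) - 1) = (v 0 : ℝ) + v 1 - 2 := by
      simp [Lfun, Fin.sum_univ_two]; ring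
    rw [hL2] at hL ⊢
    have e := apoly_two (fun i => (v i : ℝ))
    simp only [Nat.zero_add] at e ⊢
    rw [e]
    push Not at hex
    obtain ⟨⟨i, hi, hi1⟩, ⟨j, hj, hj1⟩, h3, h4⟩ := hex
    have hi' : i = 1 := by
      clear hi1 h3 h4; revert hi; revert i; decide
    have hj' : j = 0 := by
      fin_cases j
      · rfl
      · exact absurd rfl hj
    subst hi' hj'
    have a0 := hv 0
    have a1 := hv 1
    have b1 : v 1 ≠ 2 := by
      intro h
      obtain ⟨k, hk, hk2, hk3⟩ := h3 (by omega) 1 (by decide) h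
      clear hk3; revert hk hk2; revert k; decide
    have b0 : v 0 ≠ 2 := by
      intro h
      obtain ⟨k, hk, hk2, hk3⟩ := h4 (by show 2 ≤ v 1; omega) 0 (by decide) h
      clear hk3; revert hk hk2; revert k; decide
    have c0 : (3 : ℝ) ≤ v 0 := by
      have : 3 ≤ v 0 := by omega
      exact_mod_cast this
    have c1 : (3 : ℝ) ≤ v 1 := by
      have : 3 ≤ v 1 := by omega
      exact_mod_cast this
    generalize (v 0 : ℝ) = a at *
    generalize (v 1 : ℝ) = b at *
    norm_num
    nlinarith [mul_nonneg (mul_nonneg (sub_nonneg.2 c0) (sub_nonneg.2 c1)) (show 0 ≤ a + b by linarith)]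
  · obtain ⟨N1, hN1⟩ := edge m hm
    obtain ⟨N2, hN2⟩ := mid m
    set r : ℝ := (m : ℝ) + 2 with hr
    have hr0 : 0 < r := by positivity
    refine ⟨⌈r ^ 3 * max N1 N2⌉₊, fun v hv hex hL => ?_⟩
    have hL' := (Nat.le_ceil _).trans_lt hL
    obtain ⟨i, hi⟩ := Finite.exists_max v
    have hx : ∀ i, (1 : ℝ) ≤ (v i : ℝ) := fun i => by exact_mod_cast hv i
    have hmx : ∀ j, (v j : ℝ) ≤ v i := fun j => by exact_mod_cast hi j
    have hLb := Lbound2 (fun i => (v i : ℝ)) hx _ hmx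
    rw [← hr, div_mul_eq_mul_div, div_le_iff₀ hr0] at hLb
    have hbig : max N1 N2 ≤ (v i : ℝ) := by
      have : r ^ 3 * max N1 N2 < r ^ 3 * (v i : ℝ) := by nlinarith
      exact (lt_of_mul_lt_mul_left this (by positivity)).le
    have hb1 := (le_max_left _ _).trans hbig
    have hb2 := (le_max_right _ _).trans hbig
    simp only [not_or] at hex
    obtain ⟨e1, e2, e3, e4⟩ := hex
    by_cases h0 : i = 0
    · subst h0
      exact hN1 v hv e1 e3 hi hb1
    by_cases hl : i = Fin.last (m + 1)
    · subst hl
      have hrev := hN1 (fun i => v i.rev) (fun i => hv _) ?_ ?_ ?_ ?_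
      · have l1 := Lfun_rev (m + 2) (fun i => (v i : ℝ) - 1)
        have l2 : apoly (m + 2) (fun i => (v i.rev : ℝ)) = apoly (m + 2) (fun i => (v i : ℝ)) := by
          rw [apoly, apoly, ← hpoly_rev (m + 2) (fun i => (v i : ℝ))]
        rw [l1, l2] at hrev
        exact hrev
      · intro h
        apply e2
        intro i hi
        have := h i.rev (by
          intro h; apply hi; rw [← Fin.rev_rev i, h, Fin.rev_zero])
        simpa using this
      · rintro ⟨q, n, hn0, hn2, hn⟩
        apply e4
        refine ⟨by simpa using q, n.rev, ?_, hn2, ?_⟩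
        · intro h; apply hn0; rw [← Fin.rev_rev n, h, Fin.rev_last]
        · intro i hi hin
          have := hn i.rev (by intro h; apply hi; rw [← Fin.rev_rev i, h, Fin.rev_zero])
            (by intro h; apply hin; rw [← h, Fin.rev_rev])
          simpa using this
      · intro i; simpa using hi i.rev
      · simpa using hb1
    · exact hN2 v hv i h0 hl hi hb2
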